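/- arXiv:1907.09405 — 2 statements merged into one kernel-verified Lean document; each statement's English description precedes it below -/
import Mathlib

section
/- With high probability there do not exist a color i ∈ [q], sets X ⊆ S ⊆ A, T ⊆ B, and Z ⊆ T such that |S|, |T| ≥ βn, |X| = ⌈|S|/log n⌉, |Z| = ⌈γ_b·n/log n⌉ where γ_b = 10·log(e/β)/α_i, and every vertex x ∈ X is c_i-adjacent to at least k = 10·log n/log log n vertices of Z. -/
open MeasureTheory Filter Finset Asymptotics

/-- Discrete measurable structure on edge states: `none` = non-edge, `some i` = edge of color `cᵢ`. -/
instance (q : ℕ) : MeasurableSpace (Option (Fin q)) := ⊤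

/-- Distribution of the state of a single pair: non-edge with probability `1-p`,
an edge of color `cᵢ` with probability `αᵢ·p`. -/
noncomputable def colorM (q : ℕ) (α : Fin q → ℝ) (p : ℝ) : Measure (Option (Fin q)) :=
  ENNReal.ofReal (1 - p) • Measure.dirac none +
    ∑ i : Fin q, ENNReal.ofReal (α i * p) • Measure.dirac (some i)

/-- The randomly colored random bipartite graph on parts `A = B = Fin n`:
independently, each pair `(a,b)` is a non-edge with probability `1-p` and an
edge of color `cᵢ` with probability `αᵢ·p`.  A sample is a function
`f : Fin n × Fin n → Option (Fin q)`. -/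
noncomputable def graphM (n q : ℕ) (α : Fin q → ℝ) (p : ℝ) :
    Measure (Fin n × Fin n → Option (Fin q)) :=
  Measure.pi fun _ => colorM q α p
open ProbabilityTheory

lemma colorM_prob (q : ℕ) (α : Fin q → ℝ) (hα : ∀ i, 0 < α i) (hsum : ∑ i, α i = 1)
    (p : ℝ) (hp0 : 0 ≤ p) (hp1 : p ≤ 1) : IsProbabilityMeasure (colorM q α p) := by
  constructor
  simp only [colorM, Measure.coe_add, Measure.coe_smul, Measure.coe_finsetSum, Pi.add_apply,
    Pi.smul_apply, Finset.sum_apply, measure_univ, smul_eq_mul, mul_one]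
  rw [← ENNReal.ofReal_sum_of_nonneg (fun i _ => mul_nonneg (hα i).le hp0), ← Finset.sum_mul, hsum,
    ← ENNReal.ofReal_add (by linarith) (by linarith)]
  simp

lemma discO (q : ℕ) : DiscreteMeasurableSpace (Option (Fin q)) := ⟨fun _ => trivial⟩

lemma moment_one (q : ℕ) (α : Fin q → ℝ) (hα : ∀ i, 0 < α i) (hsum : ∑ i, α i = 1)
    (p : ℝ) (hp0 : 0 ≤ p) (hp1 : p ≤ 1) (i : Fin q) (h : ℝ) (hh : 1 ≤ h) :
    ∫⁻ o, (if o = some i then ENNReal.ofReal h else 1) ∂(colorM q α p)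
      ≤ ENNReal.ofReal (Real.exp (α i * p * h)) := by
  have := discO q
  have hP := colorM_prob q α hα hsum p hp0 hp1
  have hs : colorM q α p {some i} = ENNReal.ofReal (α i * p) := by
    simp [colorM, Set.indicator_apply]
  calc ∫⁻ o, (if o = some i then ENNReal.ofReal h else 1) ∂(colorM q α p)
      ≤ ∫⁻ o, (1 + Set.indicator {some i} (fun _ => ENNReal.ofReal h) o) ∂(colorM q α p) := by
        apply lintegral_mono
        intro o
        by_cases ho : o = some i <;> simp [ho]
    _ = 1 + ENNReal.ofReal h * ENNReal.ofReal (α i * p) := by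
        rw [lintegral_add_left measurable_const, lintegral_indicator_const (by measurability), hs]
        simp
    _ = ENNReal.ofReal (1 + h * (α i * p)) := by
        have := mul_nonneg (hα i).le hp0
        rw [ENNReal.ofReal_add (by norm_num) (by positivity), ENNReal.ofReal_mul (p := h) (by linarith)]
        simp
    _ ≤ _ := by
        apply ENNReal.ofReal_le_ofReal
        have := Real.add_one_le_exp (α i * p * h)
        linarith

lemma event_bound (n q : ℕ) (α : Fin q → ℝ) (hα : ∀ i, 0 < α i) (hsum : ∑ i, α i = 1)
    (p : ℝ) (hp0 : 0 ≤ p) (hp1 : p ≤ 1) (i : Fin q) (h : ℝ) (hh : 1 ≤ h) (K : ℝ)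
    (X Z : Finset (Fin n)) :
    graphM n q α p {f | ∀ x ∈ X, K ≤ ((Z.filter fun b => f (x, b) = some i).card : ℝ)} ≤
      ENNReal.ofReal (Real.exp (α i * p * h * X.card * Z.card - Real.log h * K * X.card)) := by
  have := discO q
  have hP := colorM_prob q α hα hsum p hp0 hp1
  have hh0 : 0 < h := by linarith
  have hlog : 0 ≤ Real.log h := Real.log_nonneg hh
  set g : Option (Fin q) → ENNReal := fun o => if o = some i then ENNReal.ofReal h else 1 with hg
  have hgm : Measurable g := measurable_of_countable g
  have hint : ∫⁻ f, ∏ e ∈ X ×ˢ Z, g (f e) ∂(graphM n q α p)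
      ≤ ENNReal.ofReal (Real.exp (α i * p * h * X.card * Z.card)) := by
    have hind : iIndepFun (fun (e : Fin n × Fin n) (f : Fin n × Fin n → Option (Fin q)) => g (f e))
        (graphM n q α p) :=
      iIndepFun_pi (X := fun _ => g) (fun _ => hgm.aemeasurable)
    rw [lintegral_prod_eq_prod_lintegral_of_indepFun _ _ hind
      (fun e => hgm.comp (measurable_pi_apply e))]
    have he : ∀ e : Fin n × Fin n, ∫⁻ f, g (f e) ∂(graphM n q α p) ≤
        ENNReal.ofReal (Real.exp (α i * p * h)) := by
      intro e
      have := (measurePreserving_eval (fun _ : Fin n × Fin n => colorM q α p) e).lintegral_comp hgm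
      simp only [Function.eval] at this
      unfold graphM
      rw [this]
      exact moment_one q α hα hsum p hp0 hp1 i h hh
    refine (Finset.prod_le_prod' (fun e _ => he e)).trans ?_
    rw [Finset.prod_const, ← ENNReal.ofReal_pow (Real.exp_pos _).le, ← Real.exp_nat_mul,
      Finset.card_product]
    apply le_of_eq
    congr 2
    push_cast
    ring
  have hsub : {f : Fin n × Fin n → Option (Fin q) |
      ∀ x ∈ X, K ≤ ((Z.filter fun b => f (x, b) = some i).card : ℝ)} ⊆
      {f | ENNReal.ofReal (Real.exp (Real.log h * K * X.card)) ≤ ∏ e ∈ X ×ˢ Z, g (f e)} := by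
    intro f hf
    simp only [Set.mem_ofPred_eq] at hf ⊢
    have h1 : ∏ e ∈ X ×ˢ Z, g (f e) = ENNReal.ofReal (h ^ (∑ x ∈ X,
        (Z.filter fun b => f (x, b) = some i).card)) := by
      rw [Finset.prod_product, ENNReal.ofReal_pow hh0.le, ← Finset.prod_pow_eq_pow_sum]
      refine Finset.prod_congr rfl fun x _ => ?_
      simp only [hg]
      rw [Finset.prod_ite]
      simp
    rw [h1]
    apply ENNReal.ofReal_le_ofReal
    rw [← Real.rpow_natCast, Real.rpow_def_of_pos hh0]
    apply Real.exp_le_exp.2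
    rw [mul_assoc]
    apply mul_le_mul_of_nonneg_left _ hlog
    push_cast
    have := Finset.card_nsmul_le_sum X _ K hf
    rw [nsmul_eq_mul] at this
    linarith
  have hm : Measurable (fun f : Fin n × Fin n → Option (Fin q) => ∏ e ∈ X ×ˢ Z, g (f e)) :=
    Finset.measurable_prod _ (fun e _ => hgm.comp (measurable_pi_apply e))
  have hmk := mul_meas_ge_le_lintegral (μ := graphM n q α p) hm
    (ENNReal.ofReal (Real.exp (Real.log h * K * X.card)))
  rw [Real.exp_sub, ENNReal.ofReal_div_of_pos (Real.exp_pos _),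
    ENNReal.le_div_iff_mul_le (Or.inl (by simp [Real.exp_pos])) (Or.inl (by simp)), mul_comm]
  exact (mul_le_mul_right (measure_mono hsub) _).trans (hmk.trans hint)

lemma choose_bd (n z : ℕ) (L : ℝ) (hL : 0 < L) :
    (n.choose z : ℝ) ≤ Real.exp (n / L + z * Real.log L) := by
  rcases lt_or_ge n z with h | h
  · rw [Nat.choose_eq_zero_of_lt h]; simp [(Real.exp_pos _).le]
  have h1 : (n.choose z : ℝ) * (1 / L) ^ z ≤ (1 / L + 1) ^ n := by
    rw [add_pow]
    have := Finset.single_le_sum (s := Finset.range (n + 1))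
      (f := fun m => (1 / L) ^ m * 1 ^ (n - m) * (n.choose m : ℝ))
      (fun m _ => by positivity) (Finset.mem_range.2 (Nat.lt_succ_of_le h))
    simp only [one_pow, mul_one] at this ⊢
    linarith
  have h2 : (1 / L + 1) ^ n ≤ Real.exp (n / L) := by
    have := pow_le_pow_left₀ (by positivity) (Real.add_one_le_exp (1 / L)) n
    rw [← Real.exp_nat_mul] at this
    rwa [mul_one_div] at this
  rw [Real.exp_add, mul_comm (z : ℝ), ← Real.rpow_def_of_pos hL, Real.rpow_natCast]
  rw [div_pow, one_pow, mul_one_div, div_le_iff₀ (by positivity)] at h1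
  exact h1.trans (by gcongr)

lemma sumX_bd (n : ℕ) (hn : 0 < n) :
    ∑ X : Finset (Fin n), Real.exp (- Real.log n * X.card) ≤ Real.exp 1 := by
  have hn' : (0 : ℝ) < n := by exact_mod_cast hn
  have := Fintype.sum_pow_mul_eq_add_pow (Fin n) (1 / (n : ℝ)) 1
  simp only [one_pow, mul_one, Fintype.card_fin] at this
  have h2 := pow_le_pow_left₀ (by positivity) (Real.add_one_le_exp (1 / (n : ℝ))) n
  rw [← Real.exp_nat_mul, mul_one_div_cancel hn'.ne'] at h2
  rw [← this] at h2
  refine le_trans (le_of_eq (Finset.sum_congr rfl fun X _ => ?_)) h2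
  rw [mul_comm, Real.exp_nat_mul, Real.exp_neg, Real.exp_log hn', one_div]

lemma exponent_bd (β γ a p L x z N C : ℝ) (hβ : 0 < β) (hγ : 0 < γ) (ha : 0 < a) (hL : 1 < L)
    (hN : 2 * L ≤ N) (hp0 : 0 ≤ p) (hp : p ≤ 2 * L / N) (hx1 : 1 ≤ x) (hx : β * N / L ≤ x)
    (hz : z ≤ γ * N / L + 1) (hz0 : 0 ≤ z) (hC : C = 2 * a * γ + a)
    (hE : 1 / β + (γ / β + 1) * Real.log L + C * Real.sqrt L ≤ 2 * L) :
    N / L + z * Real.log L + (a * p * Real.sqrt L * x * z - 5 * L * x) ≤ -(3 * L * x) := by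
  have hL0 : 0 < L := by linarith
  have hN0 : 0 < N := by linarith
  have hlog := Real.log_pos hL
  have hs : 0 ≤ Real.sqrt L := Real.sqrt_nonneg L
  have h1 : N / L ≤ 1 / β * x := by
    rw [one_div, ← div_eq_inv_mul, le_div_iff₀ hβ]
    calc N / L * β = β * N / L := by ring
      _ ≤ x := hx
  have h2 : z ≤ (γ / β + 1) * x := by
    have : γ * N / L ≤ γ / β * x := by
      calc γ * N / L = γ * (N / L) := by ring
        _ ≤ γ * (1 / β * x) := by gcongr
        _ = γ / β * x := by ring
    linarith
  have h3 : a * p * z ≤ C := by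
    calc a * p * z ≤ a * (2 * L / N) * (γ * N / L + 1) := by gcongr
      _ = 2 * a * γ + a * (2 * L / N) := by field_simp
      _ ≤ 2 * a * γ + a * 1 := by
        gcongr
        rw [div_le_one hN0]; exact hN
      _ = C := by rw [hC]; ring
  have h4 : z * Real.log L ≤ (γ / β + 1) * x * Real.log L := by gcongr
  have h5 : a * p * Real.sqrt L * x * z ≤ C * Real.sqrt L * x := by
    calc a * p * Real.sqrt L * x * z = (a * p * z) * (Real.sqrt L * x) := by ring
      _ ≤ C * (Real.sqrt L * x) := by gcongr
      _ = _ := by ring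
  have h6 := mul_le_mul_of_nonneg_right hE (by linarith : 0 ≤ x)
  nlinarith

lemma event_E (A B C : ℝ) :
    ∀ᶠ L : ℝ in atTop, A + B * Real.log L + C * Real.sqrt L ≤ 2 * L := by
  have h1 : (fun _ : ℝ => A) =o[atTop] (id : ℝ → ℝ) := isLittleO_const_id_atTop A
  have h2 : (fun L : ℝ => B * Real.log L) =o[atTop] (id : ℝ → ℝ) :=
    Real.isLittleO_log_id_atTop.const_mul_left B
  have h3 : (fun L : ℝ => C * Real.sqrt L) =o[atTop] (id : ℝ → ℝ) := by
    apply IsLittleO.const_mul_left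
    have h4 : (fun _ : ℝ => (1 : ℝ)) =o[atTop] Real.sqrt :=
      (isLittleO_const_id_atTop (1 : ℝ)).comp_tendsto Real.tendsto_sqrt_atTop
    refine ((isBigO_refl Real.sqrt atTop).mul_isLittleO h4).congr' ?_ ?_
    · exact Eventually.of_forall fun L => mul_one _
    · filter_upwards [eventually_ge_atTop 0] with L hL
      exact Real.mul_self_sqrt hL
  have := ((h1.add h2).add h3).bound (show (0 : ℝ) < 2 by norm_num)
  filter_upwards [this, eventually_ge_atTop 0] with L hL h0
  simp only [Real.norm_eq_abs, id, abs_of_nonneg h0] at hL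
  exact (le_abs_self _).trans hL

lemma bad_bound (n q : ℕ) (α : Fin q → ℝ) (hα : ∀ i, 0 < α i) (hsum : ∑ i, α i = 1)
    (β : ℝ) (hβ : 0 < β) (γ : Fin q → ℝ) (hγ : ∀ i, 0 < γ i) (p : ℝ) (hL : 1 < Real.log n)
    (hN : 2 * Real.log n ≤ n) (hp0 : 0 ≤ p) (hp : p ≤ 2 * Real.log n / n)
    (hE : ∀ i, 1 / β + (γ i / β + 1) * Real.log (Real.log n) +
      (2 * α i * γ i + α i) * Real.sqrt (Real.log n) ≤ 2 * Real.log n) :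
    graphM n q α p
        {f | ∃ (i : Fin q) (X S T Z : Finset (Fin n)),
          X ⊆ S ∧ Z ⊆ T ∧ β * n ≤ (S.card : ℝ) ∧ β * n ≤ (T.card : ℝ) ∧
          X.card = ⌈(S.card : ℝ) / Real.log n⌉₊ ∧
          Z.card = ⌈γ i * n / Real.log n⌉₊ ∧
          ∀ x ∈ X, 10 * Real.log n / Real.log (Real.log n) ≤
            ((Z.filter fun b => f (x, b) = some i).card : ℝ)} ≤
      ENNReal.ofReal (q * (Real.exp (-(2 * Real.log n)) * Real.exp 1)) := by
  set L := Real.log n with hLdef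
  set K := 10 * L / Real.log L with hK
  have hL0 : 0 < L := by linarith
  have hN0 : (0 : ℝ) < n := by linarith
  have hn : 0 < n := by exact_mod_cast hN0
  have hlog := Real.log_pos hL
  have hp1 : p ≤ 1 := hp.trans (by rw [div_le_one hN0]; exact hN)
  set z : Fin q → ℕ := fun i => ⌈γ i * n / L⌉₊ with hz
  set F : Finset (Finset (Fin n)) :=
    univ.filter (fun X => 1 ≤ (X.card : ℝ) ∧ β * n / L ≤ (X.card : ℝ)) with hF
  set E : Fin q → Finset (Fin n) → Finset (Fin n) → Set (Fin n × Fin n → Option (Fin q)) :=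
    fun i X Z => {f | ∀ x ∈ X, K ≤ ((Z.filter fun b => f (x, b) = some i).card : ℝ)} with hEdef
  set R : Fin q → Finset (Fin n) → Finset (Fin n) → ℝ := fun i X Z =>
    Real.exp (α i * p * Real.sqrt L * X.card * Z.card - 5 * L * X.card) with hR
  have hER : ∀ i X Z, graphM n q α p (E i X Z) ≤ ENNReal.ofReal (R i X Z) := by
    intro i X Z
    have h1 : 1 ≤ Real.sqrt L := Real.one_le_sqrt.2 hL.le
    refine (event_bound n q α hα hsum p hp0 hp1 i _ h1 K X Z).trans (le_of_eq ?_)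
    have : Real.log (Real.sqrt L) * K = 5 * L := by
      rw [Real.log_sqrt hL0.le, hK]; field_simp; norm_num
    rw [this]
  have hsub : {f | ∃ (i : Fin q) (X S T Z : Finset (Fin n)),
          X ⊆ S ∧ Z ⊆ T ∧ β * n ≤ (S.card : ℝ) ∧ β * n ≤ (T.card : ℝ) ∧
          X.card = ⌈(S.card : ℝ) / L⌉₊ ∧
          Z.card = ⌈γ i * n / L⌉₊ ∧
          ∀ x ∈ X, K ≤ ((Z.filter fun b => f (x, b) = some i).card : ℝ)} ⊆
      ⋃ i ∈ (univ : Finset (Fin q)), ⋃ X ∈ F, ⋃ Z ∈ powersetCard (z i) univ, E i X Z := by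
    rintro f ⟨i, X, S, T, Z, -, -, hS, -, hX, hZ, hf⟩
    simp only [Set.mem_iUnion]
    refine ⟨i, mem_univ _, X, ?_, Z, mem_powersetCard.2 ⟨subset_univ _, hZ⟩, hf⟩
    rw [hF, mem_filter]
    have hx : β * n / L ≤ (X.card : ℝ) := by
      rw [hX]
      refine le_trans ?_ (Nat.le_ceil _)
      gcongr
    refine ⟨mem_univ _, ?_, hx⟩
    have : (0 : ℝ) < X.card := lt_of_lt_of_le (by positivity) hx
    have : 0 < X.card := by exact_mod_cast this
    exact_mod_cast this
  have hR0 : ∀ i X Z, 0 ≤ R i X Z := fun i X Z => (Real.exp_pos _).le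
  calc _ ≤ graphM n q α p (⋃ i ∈ (univ : Finset (Fin q)), ⋃ X ∈ F,
            ⋃ Z ∈ powersetCard (z i) univ, E i X Z) := measure_mono hsub
    _ ≤ ∑ i : Fin q, ∑ X ∈ F, ∑ Z ∈ powersetCard (z i) univ, ENNReal.ofReal (R i X Z) := by
        refine (measure_biUnion_finset_le _ _).trans (Finset.sum_le_sum fun i _ => ?_)
        refine (measure_biUnion_finset_le _ _).trans (Finset.sum_le_sum fun X _ => ?_)
        exact (measure_biUnion_finset_le _ _).trans (Finset.sum_le_sum fun Z _ => hER i X Z)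
    _ = ENNReal.ofReal (∑ i : Fin q, ∑ X ∈ F, ∑ Z ∈ powersetCard (z i) univ, R i X Z) := by
        rw [ENNReal.ofReal_sum_of_nonneg
          (fun i _ => sum_nonneg fun X _ => sum_nonneg fun Z _ => hR0 i X Z)]
        refine Finset.sum_congr rfl fun i _ => ?_
        rw [ENNReal.ofReal_sum_of_nonneg (fun X _ => sum_nonneg fun Z _ => hR0 i X Z)]
        refine Finset.sum_congr rfl fun X _ => ?_
        rw [ENNReal.ofReal_sum_of_nonneg (fun Z _ => hR0 i X Z)]
    _ ≤ _ := by
        apply ENNReal.ofReal_le_ofReal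
        have hi : ∀ i ∈ (univ : Finset (Fin q)), ∑ X ∈ F, ∑ Z ∈ powersetCard (z i) univ, R i X Z
            ≤ Real.exp (-(2 * L)) * Real.exp 1 := by
          intro i _
          have hX : ∀ X ∈ F, ∑ Z ∈ powersetCard (z i) univ, R i X Z ≤
              Real.exp (-(2 * L)) * Real.exp (-L * X.card) := by
            intro X hX
            rw [hF, mem_filter] at hX
            obtain ⟨-, hx1, hx⟩ := hX
            have h1 : ∑ Z ∈ powersetCard (z i) univ, R i X Z = (n.choose (z i) : ℝ) *
                Real.exp (α i * p * Real.sqrt L * X.card * (z i) - 5 * L * X.card) := by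
              rw [Finset.sum_congr rfl (g := fun _ =>
                Real.exp (α i * p * Real.sqrt L * X.card * (z i) - 5 * L * X.card))]
              · rw [sum_const, card_powersetCard, card_univ, Fintype.card_fin, nsmul_eq_mul]
              · intro Z hZ
                rw [mem_powersetCard] at hZ
                simp only [hR, hZ.2]
            have hzle : (z i : ℝ) ≤ γ i * n / L + 1 :=
              (Nat.ceil_lt_add_one (by have := hγ i; positivity)).le
            have h2 := exponent_bd β (γ i) (α i) p L X.card (z i) n _ hβ (hγ i) (hα i) hL hN hp0 hp
              hx1 hx hzle (Nat.cast_nonneg _) rfl (hE i)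
            rw [h1]
            refine (mul_le_mul_of_nonneg_right (choose_bd n (z i) L hL0) (Real.exp_pos _).le).trans ?_
            rw [← Real.exp_add, ← Real.exp_add]
            apply Real.exp_le_exp.2
            nlinarith
          refine (Finset.sum_le_sum hX).trans ?_
          rw [← Finset.mul_sum]
          apply mul_le_mul_of_nonneg_left _ (Real.exp_pos _).le
          refine le_trans ?_ (sumX_bd n hn)
          exact Finset.sum_le_sum_of_subset_of_nonneg (subset_univ _)
            (fun X _ _ => (Real.exp_pos _).le)
        refine (Finset.sum_le_sum hi).trans (le_of_eq ?_)
        simp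


/-- Lemma 2(c): with `γ_b = 10 log(e/β)/αᵢ` and `k = 10 log n/log log n`, w.h.p.
there are no color `i` and sets `X ⊆ S ⊆ A`, `Z ⊆ T ⊆ B` with `|S|, |T| ≥ βn`,
`|X| = ⌈|S|/log n⌉`, `|Z| = ⌈γ_b n/log n⌉`, such that every `x ∈ X` is `cᵢ`-adjacent to at
least `k` vertices of `Z`. -/
theorem lemma_c (q : ℕ) (hq : 1 ≤ q) (α : Fin q → ℝ)
    (hα : ∀ i, 0 < α i) (hsum : ∑ i, α i = 1)
    (β : ℝ) (hβ : 0 < β) (hβq : β < 1 / q)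
    (w : ℕ → ℝ) (hw : Tendsto w atTop atTop)
    (hwo : w =o[atTop] fun n => Real.log n) :
    Tendsto (fun n =>
      graphM n q α ((Real.log n + w n) / n)
        {f | ¬ ∃ (i : Fin q) (X S T Z : Finset (Fin n)),
          X ⊆ S ∧ Z ⊆ T ∧ β * n ≤ (S.card : ℝ) ∧ β * n ≤ (T.card : ℝ) ∧
          X.card = ⌈(S.card : ℝ) / Real.log n⌉₊ ∧
          Z.card = ⌈10 * Real.log (Real.exp 1 / β) / α i * n / Real.log n⌉₊ ∧
          ∀ x ∈ X, 10 * Real.log n / Real.log (Real.log n) ≤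
            ((Z.filter fun b => f (x, b) = some i).card : ℝ)})
      atTop (nhds 1) := by
  set γ : Fin q → ℝ := fun i => 10 * Real.log (Real.exp 1 / β) / α i with hγdef
  have hβ1 : β < 1 := by
    refine hβq.trans_le ?_
    have : (1 : ℝ) ≤ q := by exact_mod_cast hq
    rw [div_le_one (by linarith)]; exact this
  have hγ : ∀ i, 0 < γ i := by
    intro i
    have : 0 < Real.log (Real.exp 1 / β) := by
      apply Real.log_pos
      rw [lt_div_iff₀ hβ]
      have := Real.add_one_le_exp (1 : ℝ)
      linarith
    have := hα i
    simp only [hγdef]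
    positivity
  have hlogt : Tendsto (fun n : ℕ => Real.log n) atTop atTop :=
    Real.tendsto_log_atTop.comp tendsto_natCast_atTop_atTop
  have hE : ∀ᶠ n : ℕ in atTop, ∀ i, 1 / β + (γ i / β + 1) * Real.log (Real.log n) +
      (2 * α i * γ i + α i) * Real.sqrt (Real.log n) ≤ 2 * Real.log n := by
    rw [eventually_all]
    intro i
    exact hlogt.eventually (event_E _ _ _)
  have hN : ∀ᶠ n : ℕ in atTop, 2 * Real.log n ≤ n := by
    have := (Real.isLittleO_log_id_atTop.bound (show (0 : ℝ) < 1 / 2 by norm_num))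
    filter_upwards [tendsto_natCast_atTop_atTop.eventually this] with n hn
    simp only [Real.norm_eq_abs, id, Nat.abs_cast] at hn
    have := le_abs_self (Real.log n)
    linarith
  have hwb := hwo.bound (show (0 : ℝ) < 1 by norm_num)
  have hev : ∀ᶠ n : ℕ in atTop, 1 - ENNReal.ofReal
      (q * (Real.exp (-(2 * Real.log n)) * Real.exp 1)) ≤
      graphM n q α ((Real.log n + w n) / n)
        {f | ¬ ∃ (i : Fin q) (X S T Z : Finset (Fin n)),
          X ⊆ S ∧ Z ⊆ T ∧ β * n ≤ (S.card : ℝ) ∧ β * n ≤ (T.card : ℝ) ∧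
          X.card = ⌈(S.card : ℝ) / Real.log n⌉₊ ∧
          Z.card = ⌈10 * Real.log (Real.exp 1 / β) / α i * n / Real.log n⌉₊ ∧
          ∀ x ∈ X, 10 * Real.log n / Real.log (Real.log n) ≤
            ((Z.filter fun b => f (x, b) = some i).card : ℝ)} ∧
      graphM n q α ((Real.log n + w n) / n)
        {f | ¬ ∃ (i : Fin q) (X S T Z : Finset (Fin n)),
          X ⊆ S ∧ Z ⊆ T ∧ β * n ≤ (S.card : ℝ) ∧ β * n ≤ (T.card : ℝ) ∧
          X.card = ⌈(S.card : ℝ) / Real.log n⌉₊ ∧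
          Z.card = ⌈10 * Real.log (Real.exp 1 / β) / α i * n / Real.log n⌉₊ ∧
          ∀ x ∈ X, 10 * Real.log n / Real.log (Real.log n) ≤
            ((Z.filter fun b => f (x, b) = some i).card : ℝ)} ≤ 1 := by
    filter_upwards [hE, hN, hwb, hlogt.eventually_gt_atTop 1, hw.eventually_ge_atTop 0]
      with n hE hN hwb hL hw0
    have hN0 : (0 : ℝ) < n := by linarith
    have hp0 : 0 ≤ (Real.log n + w n) / n := by
      apply div_nonneg <;> linarith
    have hp : (Real.log n + w n) / n ≤ 2 * Real.log n / n := by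
      rw [Real.norm_eq_abs, Real.norm_eq_abs, abs_of_nonneg hw0,
        abs_of_pos (by linarith : 0 < Real.log n)] at hwb
      gcongr
      linarith
    have hp1 := hp.trans (by rw [div_le_one hN0]; exact hN)
    have hP := colorM_prob q α hα hsum _ hp0 hp1
    have hPG : IsProbabilityMeasure (graphM n q α ((Real.log n + w n) / n)) := by
      unfold graphM; infer_instance
    have := discO q
    refine ⟨?_, prob_le_one⟩
    have hb := bad_bound n q α hα hsum β hβ γ hγ _ hL hN hp0 hp hE
    rw [← Set.compl_ofPred, prob_compl_eq_one_sub (Set.toFinite _).measurableSet]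
    exact tsub_le_tsub_left hb 1
  refine tendsto_of_tendsto_of_tendsto_of_le_of_le' ?_ tendsto_const_nhds
    (hev.mono fun n h => h.1) (hev.mono fun n h => h.2)
  have h0 : Tendsto (fun n : ℕ => (q : ℝ) * (Real.exp (-(2 * Real.log n)) * Real.exp 1)) atTop
      (nhds 0) := by
    have h1 : Tendsto (fun n : ℕ => Real.exp (-(2 * Real.log n))) atTop (nhds 0) :=
      Real.tendsto_exp_neg_atTop_nhds_zero.comp (hlogt.const_mul_atTop (by norm_num))
    simpa using (h1.mul_const (Real.exp 1)).const_mul (q : ℝ)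
  have h2 := ENNReal.tendsto_ofReal h0
  rw [ENNReal.ofReal_zero] at h2
  simpa using ENNReal.Tendsto.sub tendsto_const_nhds h2 (Or.inl ENNReal.one_ne_top)
end

section
/- Let β ∈ (0,1) and α ∈ (0,1] be constants, set γ_d = (4/α)·log(e/β), and for each n ≥ 3 let p_n = (log n + ω(n))/n where ω(n) → ∞ and ω(n) = o(log n). Then the sequence a_n = C(n, ⌊βn⌋)² · C(⌊βn⌋, ⌈γ_d·n/log n⌉) · (1 − α·p_n)^{⌊βn⌋·⌈γ_d·n/log n⌉} tends to 0 as n → ∞. -/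
open Filter

lemma choose_le_exp_aux (N j : ℕ) (x : ℝ) (hx : 0 < x) :
    (N.choose j : ℝ) ≤ Real.exp (x * N - j * Real.log x) := by
  have h1 : (N.choose j : ℝ) * x ^ j ≤ (x + 1) ^ N := by
    rcases le_or_gt j N with hj | hj
    · rw [add_pow]
      have := Finset.single_le_sum (f := fun i => x ^ i * 1 ^ (N - i) * (N.choose i : ℝ))
        (s := Finset.range (N + 1)) (fun i _ => by positivity)
        (Finset.mem_range.mpr (Nat.lt_succ_of_le hj))
      simp only [one_pow, mul_one] at this ⊢
      linarith
    · rw [Nat.choose_eq_zero_of_lt hj]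
      simp only [Nat.cast_zero, zero_mul]
      positivity
  have h2 : (x + 1) ^ N ≤ Real.exp (x * N) := by
    rw [mul_comm, Real.exp_nat_mul]
    exact pow_le_pow_left₀ (by positivity) (Real.add_one_le_exp x) N
  have h3 : Real.exp (j * Real.log x) = x ^ j := by
    rw [Real.exp_nat_mul, Real.exp_log hx]
  rw [Real.exp_sub, h3, le_div_iff₀ (by positivity)]
  exact h1.trans h2

/-- with `γ_d = (4/α) log(e/β)` and `p_n = (log n + ω(n))/n`, the union-bound
estimate of Lemma 2(d),
`C(n,⌊βn⌋)² · C(⌊βn⌋,⌈γ_d n/log n⌉) · (1 − α p_n)^{⌊βn⌋·⌈γ_d n/log n⌉}`, tends to `0`. -/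
theorem lemma_d_estimate (β α γd : ℝ) (hβ : 0 < β) (hβ1 : β < 1)
    (hα : 0 < α) (hα1 : α ≤ 1) (hγd : γd = 4 / α * Real.log (Real.exp 1 / β))
    (w : ℕ → ℝ) (hw : Tendsto w atTop atTop)
    (hwo : w =o[atTop] fun n => Real.log n)
    (p : ℕ → ℝ) (hp : ∀ n : ℕ, p n = (Real.log n + w n) / n) :
    Tendsto (fun n : ℕ =>
      ((n.choose ⌊β * n⌋₊ : ℝ)) ^ 2 * ((⌊β * n⌋₊).choose ⌈γd * n / Real.log n⌉₊ : ℝ) *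
        (1 - α * p n) ^ (⌊β * n⌋₊ * ⌈γd * n / Real.log n⌉₊))
      atTop (nhds 0) := by
  have hlogβ : Real.log β < 0 := Real.log_neg hβ hβ1
  obtain ⟨l, hl⟩ : ∃ l, l = -Real.log β := ⟨_, rfl⟩
  have hl0 : 0 < l := by linarith
  have hL : Real.log (Real.exp 1 / β) = 1 + l := by
    rw [Real.log_div (Real.exp_pos 1).ne' hβ.ne', Real.log_exp, hl]; ring
  rw [hL] at hγd
  have hαγ : α * γd = 4 * (1 + l) := by rw [hγd]; field_simp
  have hγ0 : 0 < γd := by rw [hγd]; positivity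
  have hcast : Tendsto (fun n : ℕ => (n : ℝ)) atTop atTop := tendsto_natCast_atTop_atTop
  have hlog : Tendsto (fun n : ℕ => Real.log n) atTop atTop :=
    Real.tendsto_log_atTop.comp hcast
  have hlo : (fun n : ℕ => Real.log n) =o[atTop] fun n : ℕ => (n : ℝ) :=
    Real.isLittleO_log_id_atTop.comp_tendsto hcast
  have hbound : Tendsto (fun n : ℕ => Real.exp (-(β / 2 * n) + (3 + l))) atTop (nhds 0) := by
    apply Real.tendsto_exp_atBot.comp
    apply tendsto_atBot_add_const_right
    apply tendsto_neg_atTop_atBot.comp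
    exact hcast.const_mul_atTop (by positivity)
  have main : ∀ᶠ n : ℕ in atTop, 0 ≤ 1 - α * p n ∧
      ((n.choose ⌊β * n⌋₊ : ℝ)) ^ 2 * ((⌊β * n⌋₊).choose ⌈γd * n / Real.log n⌉₊ : ℝ) *
        (1 - α * p n) ^ (⌊β * n⌋₊ * ⌈γd * n / Real.log n⌉₊) ≤
        Real.exp (-(β / 2 * n) + (3 + l)) := by
    filter_upwards [hw.eventually_ge_atTop 0, hwo.bound (c := 1) one_pos,
      hlo.bound (c := 1 / 2) (by norm_num), hlog.eventually_ge_atTop 1,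
      hlog.eventually_ge_atTop (2 * γd * l / β), hcast.eventually_ge_atTop 1]
      with n hw0 hw1 hln hlog1 hlog2 hn1
    have hn0 : (0 : ℝ) < n := by linarith
    have hlp : 0 < Real.log n := by linarith
    rw [Real.norm_of_nonneg hw0, Real.norm_of_nonneg hlp.le] at hw1
    rw [Real.norm_of_nonneg hlp.le, Real.norm_of_nonneg hn0.le] at hln
    have hp0 : Real.log n / n ≤ p n := by rw [hp]; gcongr; linarith
    have hp00 : 0 ≤ p n := le_trans (by positivity) hp0
    have hp1 : p n ≤ 1 := by rw [hp, div_le_one hn0]; linarith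
    have hbase : 0 ≤ 1 - α * p n := by nlinarith
    refine ⟨hbase, ?_⟩
    have hm1 : β * n - 1 ≤ (⌊β * n⌋₊ : ℝ) := (Nat.sub_one_lt_floor _).le
    have hk1 : γd * n / Real.log n ≤ (⌈γd * n / Real.log n⌉₊ : ℝ) := Nat.le_ceil _
    have hk2 : (⌈γd * n / Real.log n⌉₊ : ℝ) ≤ γd * n / Real.log n + 1 :=
      (Nat.ceil_lt_add_one (by positivity)).le
    generalize ⌊β * n⌋₊ = m at *
    have hk3 : γd * n / Real.log n * l ≤ β / 2 * n := by
      rw [div_le_iff₀ hβ] at hlog2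
      rw [div_mul_eq_mul_div, div_le_iff₀ hlp]
      nlinarith
    have hk4 : γd * n / Real.log n * (Real.log n / n) = γd := by field_simp
    have hq0 : 0 ≤ γd * n / Real.log n := by positivity
    generalize ⌈γd * n / Real.log n⌉₊ = k at *
    have hpk : γd ≤ p n * k := by
      rw [← hk4, mul_comm]
      exact mul_le_mul hp0 hk1 hq0 hp00
    have hαpk : 4 * (1 + l) ≤ α * (p n * k) := by
      rw [← hαγ]; gcongr
    have c1 := choose_le_exp_aux n m β hβ
    have c2 := choose_le_exp_aux m k β hβ
    have c3 : (1 - α * p n) ^ (m * k) ≤ Real.exp ((m * k : ℕ) * (-(α * p n))) := by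
      rw [Real.exp_nat_mul]
      exact pow_le_pow_left₀ hbase (by linarith [Real.add_one_le_exp (-(α * p n))]) _
    calc _ ≤ (Real.exp (β * n - m * Real.log β)) ^ 2 * Real.exp (β * m - k * Real.log β) *
          Real.exp ((m * k : ℕ) * (-(α * p n))) := by gcongr
      _ = Real.exp (2 * (β * n - m * Real.log β) + (β * m - k * Real.log β) +
          (m * k : ℕ) * (-(α * p n))) := by
        rw [Real.exp_add, Real.exp_add, two_mul, Real.exp_add, sq]
      _ ≤ _ := by
        apply Real.exp_le_exp.mpr
        have e : Real.log β = -l := by linarith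
        rw [e]
        push_cast
        have hm0 : (0 : ℝ) ≤ m := Nat.cast_nonneg m
        have f1 := mul_le_mul_of_nonneg_left hαpk hm0
        have f2 : (k : ℝ) * l ≤ β / 2 * n + l := by nlinarith
        have f3 : β * m ≤ m := by nlinarith
        have f4 : 0 ≤ m * l := by positivity
        nlinarith
  refine squeeze_zero' ?_ (main.mono fun n h => h.2) hbound
  filter_upwards [main] with n h
  have := h.1
  positivity
end
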